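/- For every state s, the one-step variance of the posterior mean value under the posterior mean model decomposes as Var_{a,s'∼π,p̄}[V̄^π(s')] = w(s) + E[Var_{a,s'∼π,p}[V̄^π(s')]], where w(s) := Var[Σ_{a,s'} π(a|s) p(s'|s,a) V̄^π(s')] is the epistemic component (variance over the random p) and the last term is the expected aleatoric component. -/

import Mathlib

/-!
This is the law of total variance. For a fixed function `f` of the next state, the one-step mean is
linear in the transition function, so averaging over the random `q` turns it into the one-step mean
under the mean transition function. With `X` and `Y` the random one-step means of `f` and `f²`, the
total variance is therefore `E[Y] - E[X]²`, which splits at `E[X²]` into the epistemic part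
`E[X²] - E[X]²` and the aleatoric part `E[Y - X²]`.
-/

open MeasureTheory ProbabilityTheory
open scoped BigOperators

/-- One-step (aleatoric) variance of `f` at state `s` under policy `pol` and transition
function `q`: `Var_{a,s' ~ pol, q}[f s'] = Σ_{a,s'} q(a,s'|s) f(s')² − (Σ_{a,s'} q(a,s'|s) f(s'))²`. -/
noncomputable def stepVar {S A : Type*} [Fintype S] [Fintype A]
    (pol : S → A → ℝ) (q : S → A → S → ℝ) (f : S → ℝ) (s : S) : ℝ :=
  (∑ a, ∑ s', pol s a * q s a s' * (f s') ^ 2)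
    - (∑ a, ∑ s', pol s a * q s a s' * f s') ^ 2

/-- Variance of a real random variable `X` on `(Ω, μ)`: `E[X²] − (E[X])²`. -/
noncomputable def mVar {Ω : Type*} [MeasurableSpace Ω] (μ : MeasureTheory.Measure Ω)
    (X : Ω → ℝ) : ℝ :=
  (∫ ω, (X ω) ^ 2 ∂μ) - (∫ ω, X ω ∂μ) ^ 2

/-- The one-step mean `Σ_{a,s'} q(a,s'|s) f(s')` of `f` at state `s` under policy `pol` and
transition function `q`, in terms of which `stepVar` is `E[f²] - E[f]²`. -/
noncomputable def stepMean {S A : Type*} [Fintype S] [Fintype A]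
    (pol : S → A → ℝ) (q : S → A → S → ℝ) (f : S → ℝ) (s : S) : ℝ :=
  ∑ a, ∑ s', pol s a * q s a s' * f s'

lemma stepVar_eq_stepMean_sq_sub {S A : Type*} [Fintype S] [Fintype A]
    (pol : S → A → ℝ) (q : S → A → S → ℝ) (f : S → ℝ) (s : S) :
    stepVar pol q f s = stepMean pol q (fun s' => f s' ^ 2) s - stepMean pol q f s ^ 2 :=
  rfl

section RandomTransition

variable {S A Ω : Type*} [Fintype S] [Fintype A] [MeasurableSpace Ω] {μ : Measure Ω}
  {q : Ω → S → A → S → ℝ} {s : S}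

lemma memLp_stepMean {e : ENNReal} (hq : ∀ a s', MemLp (fun ω => q ω s a s') e μ)
    (pol : S → A → ℝ) (f : S → ℝ) :
    MemLp (fun ω => stepMean pol (q ω) f s) e μ :=
  memLp_finsetSum _ fun a _ => memLp_finsetSum _ fun s' _ =>
    ((hq a s').const_mul (pol s a)).mul_const (f s')

lemma integrable_stepMean (hq : ∀ a s', Integrable (fun ω => q ω s a s') μ)
    (pol : S → A → ℝ) (f : S → ℝ) :
    Integrable (fun ω => stepMean pol (q ω) f s) μ :=
  memLp_one_iff_integrable.1 <|
    memLp_stepMean (fun a s' => memLp_one_iff_integrable.2 (hq a s')) pol f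

lemma integral_stepMean (hq : ∀ a s', Integrable (fun ω => q ω s a s') μ)
    (pol : S → A → ℝ) (f : S → ℝ) :
    ∫ ω, stepMean pol (q ω) f s ∂μ = stepMean pol (fun s a s' => ∫ ω, q ω s a s' ∂μ) f s := by
  have hterm (a : A) (s' : S) : Integrable (fun ω => pol s a * q ω s a s' * f s') μ :=
    ((hq a s').const_mul _).mul_const _
  simp only [stepMean]
  rw [integral_finsetSum _ fun a _ => integrable_finsetSum _ fun s' _ => hterm a s']
  refine Finset.sum_congr rfl fun a _ => ?_
  rw [integral_finsetSum _ fun s' _ => hterm a s']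
  simp only [integral_mul_const, integral_const_mul]

lemma integral_stepVar (hq : ∀ a s', Integrable (fun ω => q ω s a s') μ)
    (hq2 : ∀ a s', MemLp (fun ω => q ω s a s') 2 μ) (pol : S → A → ℝ) (f : S → ℝ) :
    ∫ ω, stepVar pol (q ω) f s ∂μ
      = stepMean pol (fun s a s' => ∫ ω, q ω s a s' ∂μ) (fun s' => f s' ^ 2) s
        - ∫ ω, stepMean pol (q ω) f s ^ 2 ∂μ := by
  simp only [stepVar_eq_stepMean_sq_sub]
  rw [integral_sub (integrable_stepMean hq pol _) (memLp_stepMean hq2 pol f).integrable_sq,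
    integral_stepMean hq]

theorem total_uncertainty_decomposition_general
    (hq : ∀ a s', Integrable (fun ω => q ω s a s') μ)
    (hq2 : ∀ a s', MemLp (fun ω => q ω s a s') 2 μ) (pol : S → A → ℝ) (f : S → ℝ) :
    stepVar pol (fun s a s' => ∫ ω, q ω s a s' ∂μ) f s
      = mVar μ (fun ω => stepMean pol (q ω) f s) + ∫ ω, stepVar pol (q ω) f s ∂μ := by
  rw [stepVar_eq_stepMean_sq_sub, integral_stepVar hq hq2, mVar, integral_stepMean hq]
  ring

end RandomTransition

/-- uncertainty decomposition, eq. (10): for every state `s`,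
`Var_{a,s'∼π,p̄}[V̄^π(s')] = w(s) + E[Var_{a,s'∼π,p}[V̄^π(s')]]`. -/
theorem total_uncertainty_decomposition
    {S A : Type*} [Fintype S] [Fintype A] [Nonempty S] [Nonempty A]
    {Ω : Type*} [MeasurableSpace Ω] {μ : Measure Ω} [IsProbabilityMeasure μ]
    (γ : ℝ) (hγ0 : 0 ≤ γ) (hγ1 : γ < 1)
    (r : S → A → ℝ) (pol : S → A → ℝ)
    (hpol0 : ∀ s a, 0 ≤ pol s a) (hpol1 : ∀ s, ∑ a, pol s a = 1)
    (p : Ω → S → A → S → ℝ)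
    (hp0 : ∀ ω s a s', 0 ≤ p ω s a s') (hp1 : ∀ ω s a, ∑ s', p ω s a s' = 1)
    (hpMeas : ∀ s a s', Measurable fun ω => p ω s a s')
    (V : Ω → S → ℝ)
    (hVMeas : ∀ s, Measurable fun ω => V ω s)
    (hBellman : ∀ ω s, V ω s = (∑ a, pol s a * r s a)
        + γ * ∑ a, ∑ s', pol s a * p ω s a s' * V ω s')
    (hpInt : ∀ s a s', Integrable (fun ω => p ω s a s') μ)
    (hpSqInt : ∀ s a s', Integrable (fun ω => (p ω s a s') ^ 2) μ)
    (hVInt : ∀ s, Integrable (fun ω => V ω s) μ)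
    (hVSqInt : ∀ s, Integrable (fun ω => (V ω s) ^ 2) μ)
    :
    ∀ s : S,
      stepVar pol (fun s a s' => ∫ ω, p ω s a s' ∂μ) (fun s' => ∫ ω, V ω s' ∂μ) s
        = mVar μ (fun ω => ∑ a, ∑ s', pol s a * p ω s a s' * (∫ ω', V ω' s' ∂μ))
          + ∫ ω, stepVar pol (p ω) (fun s' => ∫ ω', V ω' s' ∂μ) s ∂μ := by
  intro s
  have hpL2 (a : A) (s' : S) : MemLp (fun ω => p ω s a s') 2 μ :=
    (memLp_two_iff_integrable_sq (hpMeas s a s').aestronglyMeasurable).2 (hpSqInt s a s')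
  exact total_uncertainty_decomposition_general (hpInt s) hpL2 pol _
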